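/- For any convex bodies K and C in ℝⁿ and any α, β > 0, the function x ↦ |αK ∩ (x+βC)|^{1/n} is concave on the set αK − βC (Minkowski difference body αK + (−βC)). -/

import Mathlib

open MeasureTheory Pointwise

/-!
The fibres `K ∩ (x + C)` vary concavely: by convexity, a convex combination of points of the fibres
over `x` and `y` lies in the fibre over the same combination of `x` and `y`. Brunn–Minkowski
therefore makes the `n`-th root of their volume concave.

Brunn–Minkowski follows from the Prékopa–Leindler inequality, applied to the indicators of the two
sets rescaled to measure one. On the line, Prékopa–Leindler is obtained by integrating the
one-dimensional Brunn–Minkowski inequality over superlevel sets; Tonelli's theorem passes it to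
products, and linear images and scalar multiples then give every Haar measure on a
finite-dimensional space.
-/

open Module (finrank)
open scoped ENNReal

theorem measure_le_measure_add_left {G : Type*} [AddGroup G] [MeasurableSpace G]
    [MeasurableAdd G] (μ : Measure G) [μ.IsAddLeftInvariant] {A : Set G} (hA : A.Nonempty)
    (B : Set G) : μ B ≤ μ (A + B) := by
  obtain ⟨a, ha⟩ := hA
  calc μ B = μ (a +ᵥ B) := (measure_vadd μ a B).symm
    _ ≤ μ (A + B) := measure_mono (Set.vadd_set_subset_iff.2 fun _ hb => Set.add_mem_add ha hb)

theorem volume_add_volume_le_of_isGreatest_of_isLeast {A B : Set ℝ} {a b : ℝ}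
    (ha : IsGreatest A a) (hb : IsLeast B b) (hB : MeasurableSet B) :
    volume A + volume B ≤ volume (A + B) := by
  have hinter : (b +ᵥ A) ∩ (a +ᵥ B) ⊆ {a + b} := by
    rintro _ ⟨⟨x, hx, rfl⟩, y, hy, hxy⟩
    have hxa : x ≤ a := ha.2 hx
    have hby : b ≤ y := hb.2 hy
    simp only [vadd_eq_add, Set.mem_singleton_iff] at hxy ⊢
    linarith
  have hdisj : AEDisjoint volume (b +ᵥ A) (a +ᵥ B) :=
    measure_mono_null hinter Real.volume_singleton
  have hunion : (b +ᵥ A) ∪ (a +ᵥ B) ⊆ A + B := by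
    refine Set.union_subset ?_ ?_
    · exact Set.vadd_set_subset_iff.2 fun x hx => ⟨x, hx, b, hb.1, add_comm x b⟩
    · exact Set.vadd_set_subset_iff.2 fun y hy => Set.add_mem_add ha.1 hy
  calc volume A + volume B = volume (b +ᵥ A) + volume (a +ᵥ B) := by simp only [measure_vadd]
    _ = volume ((b +ᵥ A) ∪ (a +ᵥ B)) :=
        (measure_union₀ (hB.const_vadd a).nullMeasurableSet hdisj).symm
    _ ≤ volume (A + B) := measure_mono hunion

theorem volume_add_volume_le_volume_add {A B : Set ℝ} (hA : MeasurableSet A)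
    (hB : MeasurableSet B) (hAne : A.Nonempty) (hBne : B.Nonempty) :
    volume A + volume B ≤ volume (A + B) := by
  obtain ⟨a, ha⟩ := hAne
  obtain ⟨b, hb⟩ := hBne
  rw [hA.measure_eq_iSup_isCompact volume, hB.measure_eq_iSup_isCompact volume]
  simp only [iSup_and']
  refine ENNReal.biSup_add_biSup_le' ⟨∅, A.empty_subset, isCompact_empty⟩
    ⟨∅, B.empty_subset, isCompact_empty⟩ fun K hK L hL => ?_
  have hK' : IsCompact (insert a K) := hK.2.insert a
  have hL' : IsCompact (insert b L) := hL.2.insert b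
  obtain ⟨m, hm⟩ := hK'.exists_isGreatest (Set.insert_nonempty a K)
  obtain ⟨l, hl⟩ := hL'.exists_isLeast (Set.insert_nonempty b L)
  calc volume K + volume L ≤ volume (insert a K) + volume (insert b L) := by
        gcongr <;> exact Set.subset_insert _ _
    _ ≤ volume (insert a K + insert b L) :=
        volume_add_volume_le_of_isGreatest_of_isLeast hm hl hL'.measurableSet
    _ ≤ volume (A + B) := measure_mono <|
        Set.add_subset_add (Set.insert_subset ha hK.1) (Set.insert_subset hb hL.1)

theorem volume_setOf_ofReal_lt_inter_Ioi (y : ℝ≥0∞) :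
    volume ({l : ℝ | ENNReal.ofReal l < y} ∩ Set.Ioi 0) = y := by
  induction y with
  | top => simp
  | coe y =>
    have : {l : ℝ | ENNReal.ofReal l < y} ∩ Set.Ioi 0 = Set.Ioo 0 (y : ℝ) := by
      ext l
      simp +contextual [ENNReal.ofReal_lt_coe_iff, and_comm, le_of_lt]
    simp [this]

theorem lintegral_eq_lintegral_meas_ofReal_lt {α : Type*} [MeasurableSpace α] (μ : Measure α)
    [SFinite μ] {f : α → ℝ≥0∞} (hf : Measurable f) :
    ∫⁻ x, f x ∂μ = ∫⁻ l in Set.Ioi (0 : ℝ), μ {x | ENNReal.ofReal l < f x} := by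
  have hS : MeasurableSet {p : α × ℝ | ENNReal.ofReal p.2 < f p.1} :=
    measurableSet_lt (by fun_prop) (by fun_prop)
  have hslice (x : α) :
      volume.restrict (Set.Ioi (0 : ℝ)) {l | ENNReal.ofReal l < f x} = f x := by
    rw [Measure.restrict_apply (measurableSet_lt (by fun_prop) (by fun_prop)),
      volume_setOf_ofReal_lt_inter_Ioi]
  calc ∫⁻ x, f x ∂μ
      = μ.prod (volume.restrict (Set.Ioi 0)) {p | ENNReal.ofReal p.2 < f p.1} := by
        rw [Measure.prod_apply hS]; exact lintegral_congr fun x => (hslice x).symm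
    _ = ∫⁻ l in Set.Ioi (0 : ℝ), μ {x | ENNReal.ofReal l < f x} := Measure.prod_apply_symm hS

theorem ennreal_geom_mean_le_arith_mean2_weighted {t s : ℝ} (ht : 0 < t) (hs : 0 < s)
    (hts : t + s = 1) (x y : ℝ≥0∞) :
    x ^ t * y ^ s ≤ ENNReal.ofReal t * x + ENNReal.ofReal s * y := by
  have ht1 : 1 < t⁻¹ := (one_lt_inv₀ ht).2 (by linarith)
  have hconj : (t⁻¹).HolderConjugate s⁻¹ := Real.holderConjugate_iff.2 ⟨ht1, by simpa⟩
  simpa [ENNReal.rpow_rpow_inv, ENNReal.ofReal_inv_of_pos, ht, hs, ht.ne', hs.ne', div_eq_mul_inv,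
    mul_comm] using ENNReal.young_inequality (x ^ t) (y ^ s) hconj

theorem smul_superlevel_add_smul_superlevel_subset {E : Type*} [AddCommGroup E] [Module ℝ E]
    {t s : ℝ} (ht : 0 < t) (hs : 0 < s) (hts : t + s = 1) {f g h : E → ℝ≥0∞}
    (hfgh : ∀ x y, f x ^ t * g y ^ s ≤ h (t • x + s • y)) (c : ℝ≥0∞) :
    t • {x | c < f x} + s • {x | c < g x} ⊆ {x | c < h x} := by
  rintro _ ⟨_, ⟨x, hx, rfl⟩, _, ⟨y, hy, rfl⟩, rfl⟩
  calc c = c ^ t * c ^ s := by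
        rw [← ENNReal.rpow_add_of_nonneg t s ht.le hs.le, hts, ENNReal.rpow_one]
    _ < f x ^ t * g y ^ s :=
        ENNReal.mul_lt_mul (ENNReal.rpow_lt_rpow hx ht) (ENNReal.rpow_lt_rpow hy hs)
    _ ≤ h (t • x + s • y) := hfgh x y

section RealLine

variable {t s : ℝ} {f g h : ℝ → ℝ≥0∞}

theorem volume_superlevel_add_le_of_iSup_eq (ht : 0 < t) (hs : 0 < s) (hts : t + s = 1)
    (hf : Measurable f) (hg : Measurable g) (hfg : ⨆ x, f x = ⨆ x, g x)
    (hfgh : ∀ x y, f x ^ t * g y ^ s ≤ h (t • x + s • y)) (c : ℝ≥0∞) :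
    ENNReal.ofReal t * volume {x | c < f x} + ENNReal.ofReal s * volume {x | c < g x}
      ≤ volume {x | c < h x} := by
  rcases lt_or_ge c (⨆ x, f x) with hc | hc
  · have hfne : {x | c < f x}.Nonempty := lt_iSup_iff.1 hc
    have hgne : {x | c < g x}.Nonempty := lt_iSup_iff.1 (hc.trans_eq hfg)
    calc ENNReal.ofReal t * volume {x | c < f x} + ENNReal.ofReal s * volume {x | c < g x}
        = volume (t • {x | c < f x}) + volume (s • {x | c < g x}) := by
          simp [Measure.addHaar_smul, abs_of_pos, ht, hs]
      _ ≤ volume (t • {x | c < f x} + s • {x | c < g x}) :=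
          volume_add_volume_le_volume_add
            ((measurableSet_lt measurable_const hf).const_smul_of_ne_zero ht.ne')
            ((measurableSet_lt measurable_const hg).const_smul_of_ne_zero hs.ne')
            hfne.smul_set hgne.smul_set
      _ ≤ volume {x | c < h x} :=
          measure_mono (smul_superlevel_add_smul_superlevel_subset ht hs hts hfgh c)
  · have hf_empty : {x | c < f x} = ∅ := by
      simpa [Set.eq_empty_iff_forall_notMem] using hc
    have hg_empty : {x | c < g x} = ∅ := by
      simpa [Set.eq_empty_iff_forall_notMem] using hfg.symm.trans_le hc
    simp [hf_empty, hg_empty]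

theorem lintegral_add_lintegral_le_of_iSup_eq (ht : 0 < t) (hs : 0 < s) (hts : t + s = 1)
    (hf : Measurable f) (hg : Measurable g) (hh : Measurable h) (hfg : ⨆ x, f x = ⨆ x, g x)
    (hfgh : ∀ x y, f x ^ t * g y ^ s ≤ h (t • x + s • y)) :
    ENNReal.ofReal t * (∫⁻ x, f x) + ENNReal.ofReal s * (∫⁻ x, g x) ≤ ∫⁻ x, h x := by
  have hlevel : Measurable fun l : ℝ => volume {x | ENNReal.ofReal l < f x} :=
    Antitone.measurable fun l m hlm =>
      measure_mono fun x hx => (ENNReal.ofReal_le_ofReal hlm).trans_lt hx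
  rw [lintegral_eq_lintegral_meas_ofReal_lt volume hf,
    lintegral_eq_lintegral_meas_ofReal_lt volume hg,
    lintegral_eq_lintegral_meas_ofReal_lt volume hh,
    ← lintegral_const_mul' _ _ ENNReal.ofReal_ne_top,
    ← lintegral_const_mul' _ _ ENNReal.ofReal_ne_top,
    ← lintegral_add_left (hlevel.const_mul _)]
  exact lintegral_mono fun l => volume_superlevel_add_le_of_iSup_eq ht hs hts hf hg hfg hfgh _

theorem inv_mul_rpow_mul_inv_mul_rpow (ht : 0 ≤ t) (hs : 0 ≤ s) {a b : ℝ≥0∞} (ha : a ≠ ∞)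
    (hb : b ≠ ∞) (u v : ℝ≥0∞) :
    (a⁻¹ * u) ^ t * (b⁻¹ * v) ^ s = (a ^ t * b ^ s)⁻¹ * (u ^ t * v ^ s) := by
  rw [ENNReal.mul_rpow_of_nonneg _ _ ht, ENNReal.mul_rpow_of_nonneg _ _ hs, ENNReal.inv_rpow,
    ENNReal.inv_rpow, ENNReal.mul_inv (.inr (ENNReal.rpow_ne_top_of_nonneg hs hb))
      (.inl (ENNReal.rpow_ne_top_of_nonneg ht ha)), mul_mul_mul_comm]

theorem lintegral_rpow_mul_lintegral_rpow_le_of_iSup_ne_top (ht : 0 < t) (hs : 0 < s)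
    (hts : t + s = 1) (hf : Measurable f) (hg : Measurable g) (hh : Measurable h)
    (hf_bdd : ⨆ x, f x ≠ ∞) (hg_bdd : ⨆ x, g x ≠ ∞)
    (hfgh : ∀ x y, f x ^ t * g y ^ s ≤ h (t • x + s • y)) :
    (∫⁻ x, f x) ^ t * (∫⁻ x, g x) ^ s ≤ ∫⁻ x, h x := by
  set a := ⨆ x, f x
  set b := ⨆ x, g x
  rcases eq_or_ne a 0 with ha0 | ha0
  · have hf0 : ∀ x, f x = 0 := ENNReal.iSup_eq_zero.1 ha0
    simp [hf0, ht]
  rcases eq_or_ne b 0 with hb0 | hb0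
  · have hg0 : ∀ x, g x = 0 := ENNReal.iSup_eq_zero.1 hb0
    simp [hg0, hs]
  have hc0 : (a ^ t * b ^ s)⁻¹ ≠ 0 := ENNReal.inv_ne_zero.2 <| ENNReal.mul_ne_top
    (ENNReal.rpow_ne_top_of_nonneg ht.le hf_bdd) (ENNReal.rpow_ne_top_of_nonneg hs.le hg_bdd)
  have hctop : (a ^ t * b ^ s)⁻¹ ≠ ∞ := ENNReal.inv_ne_top.2 <| mul_ne_zero
    (by simp [ha0, hf_bdd]) (by simp [hb0, hg_bdd])
  have hscale := inv_mul_rpow_mul_inv_mul_rpow ht.le hs.le hf_bdd hg_bdd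
  have hsup : ⨆ x, a⁻¹ * f x = ⨆ x, b⁻¹ * g x := by
    rw [← ENNReal.mul_iSup, ← ENNReal.mul_iSup, ENNReal.inv_mul_cancel ha0 hf_bdd,
      ENNReal.inv_mul_cancel hb0 hg_bdd]
  -- The inequality is homogeneous, so both functions may be rescaled to have supremum one.
  refine (ENNReal.mul_le_mul_iff_right hc0 hctop).1 ?_
  calc (a ^ t * b ^ s)⁻¹ * ((∫⁻ x, f x) ^ t * (∫⁻ x, g x) ^ s)
      = (∫⁻ x, a⁻¹ * f x) ^ t * (∫⁻ x, b⁻¹ * g x) ^ s := by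
        rw [lintegral_const_mul _ hf, lintegral_const_mul _ hg, hscale]
    _ ≤ ENNReal.ofReal t * (∫⁻ x, a⁻¹ * f x) + ENNReal.ofReal s * (∫⁻ x, b⁻¹ * g x) :=
        ennreal_geom_mean_le_arith_mean2_weighted ht hs hts _ _
    _ ≤ ∫⁻ x, (a ^ t * b ^ s)⁻¹ * h x :=
        lintegral_add_lintegral_le_of_iSup_eq ht hs hts (hf.const_mul _) (hg.const_mul _)
          (hh.const_mul _) hsup fun x y => by rw [hscale]; gcongr; exact hfgh x y
    _ = (a ^ t * b ^ s)⁻¹ * ∫⁻ x, h x := lintegral_const_mul _ hh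

end RealLine

theorem tendsto_lintegral_min_natCast {α : Type*} [MeasurableSpace α] (μ : Measure α)
    {f : α → ℝ≥0∞} (hf : Measurable f) :
    Filter.Tendsto (fun n : ℕ => ∫⁻ x, min (f x) n ∂μ) .atTop (nhds (∫⁻ x, f x ∂μ)) := by
  refine lintegral_tendsto_of_tendsto_of_monotone
    (fun n => (hf.min measurable_const).aemeasurable) (.of_forall fun x m n hmn => ?_)
    (.of_forall fun x => ?_)
  · exact min_le_min_left _ (Nat.cast_le.2 hmn)
  · simpa using (tendsto_const_nhds (x := f x)).min ENNReal.tendsto_nat_nhds_top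

/-- The Prékopa–Leindler inequality holds for the measure `μ`. Stating it as a property of the
measure lets it be carried through products and linear maps. The functions take values in `ℝ≥0∞`
because the marginals of a product appear as new functions and may be infinite. -/
def IsPrekopaLeindler {E : Type*} [AddCommGroup E] [Module ℝ E] [MeasurableSpace E]
    (μ : Measure E) : Prop :=
  ∀ ⦃t s : ℝ⦄, 0 < t → 0 < s → t + s = 1 →
    ∀ ⦃f g h : E → ℝ≥0∞⦄, Measurable f → Measurable g → Measurable h →
      (∀ x y, f x ^ t * g y ^ s ≤ h (t • x + s • y)) →
        (∫⁻ x, f x ∂μ) ^ t * (∫⁻ x, g x ∂μ) ^ s ≤ ∫⁻ x, h x ∂μ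

theorem isPrekopaLeindler_volume_real : IsPrekopaLeindler (volume : Measure ℝ) := by
  intro t s ht hs hts f g h hf hg hh hfgh
  rcases eq_or_ne (∫⁻ x, f x) 0 with hf0 | hf0
  · simp [hf0, ht]
  rcases eq_or_ne (∫⁻ x, g x) 0 with hg0 | hg0
  · simp [hg0, hs]
  have htrunc := ENNReal.Tendsto.mul ((tendsto_lintegral_min_natCast volume hf).ennrpow_const t)
    (.inl (by simp [hf0, ht.le])) ((tendsto_lintegral_min_natCast volume hg).ennrpow_const s)
    (.inl (by simp [hg0, hs.le]))
  have hbdd (k : ℝ → ℝ≥0∞) (n : ℕ) : ⨆ x, min (k x) n ≠ ∞ :=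
    ne_top_of_le_ne_top (ENNReal.natCast_ne_top n) (iSup_le fun x => min_le_right _ _)
  refine le_of_tendsto' htrunc fun n => ?_
  refine lintegral_rpow_mul_lintegral_rpow_le_of_iSup_ne_top ht hs hts (hf.min measurable_const)
    (hg.min measurable_const) hh (hbdd f n) (hbdd g n) fun x y => ?_
  calc min (f x) n ^ t * min (g y) n ^ s ≤ f x ^ t * g y ^ s := by
        gcongr <;> exact min_le_left _ _
    _ ≤ h (t • x + s • y) := hfgh x y

theorem isPrekopaLeindler_dirac {E : Type*} [AddCommGroup E] [Module ℝ E] [MeasurableSpace E]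
    (x : E) : IsPrekopaLeindler (Measure.dirac x) := by
  intro t s _ _ hts f g h hf hg hh hfgh
  simpa [lintegral_dirac' _ hf, lintegral_dirac' _ hg, lintegral_dirac' _ hh,
    Convex.combo_self hts] using hfgh x x

namespace IsPrekopaLeindler

section Constructions

variable {E F : Type*} [AddCommGroup E] [Module ℝ E] [MeasurableSpace E]
  [AddCommGroup F] [Module ℝ F] [MeasurableSpace F] {μ : Measure E} {ν : Measure F}

theorem prod [SFinite ν] (hμ : IsPrekopaLeindler μ) (hν : IsPrekopaLeindler ν) :
    IsPrekopaLeindler (μ.prod ν) := by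
  intro t s ht hs hts f g h hf hg hh hfgh
  rw [lintegral_prod _ hf.aemeasurable, lintegral_prod _ hg.aemeasurable,
    lintegral_prod _ hh.aemeasurable]
  refine hμ ht hs hts hf.lintegral_prod_right' hg.lintegral_prod_right' hh.lintegral_prod_right'
    fun x y => ?_
  exact hν ht hs hts (hf.comp measurable_prodMk_left) (hg.comp measurable_prodMk_left)
    (hh.comp measurable_prodMk_left) fun u v => hfgh (x, u) (y, v)

theorem map (hμ : IsPrekopaLeindler μ) (e : E →ₗ[ℝ] F) (he : Measurable e) :
    IsPrekopaLeindler (μ.map e) := by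
  intro t s ht hs hts f g h hf hg hh hfgh
  rw [lintegral_map hf he, lintegral_map hg he, lintegral_map hh he]
  refine hμ ht hs hts (hf.comp he) (hg.comp he) (hh.comp he) fun x y => ?_
  simpa only [Function.comp_apply, map_add, map_smul] using hfgh (e x) (e y)

theorem smul (hμ : IsPrekopaLeindler μ) (c : ℝ≥0∞) : IsPrekopaLeindler (c • μ) := by
  intro t s ht hs hts f g h hf hg hh hfgh
  simp only [lintegral_smul_measure, smul_eq_mul]
  calc (c * ∫⁻ x, f x ∂μ) ^ t * (c * ∫⁻ x, g x ∂μ) ^ s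
      = c ^ (t + s) * ((∫⁻ x, f x ∂μ) ^ t * (∫⁻ x, g x ∂μ) ^ s) := by
        rw [ENNReal.mul_rpow_of_nonneg _ _ ht.le, ENNReal.mul_rpow_of_nonneg _ _ hs.le,
          ENNReal.rpow_add_of_nonneg t s ht.le hs.le, mul_mul_mul_comm]
    _ ≤ c * ∫⁻ x, h x ∂μ := by
        rw [hts, ENNReal.rpow_one]
        gcongr
        exact hμ ht hs hts hf hg hh hfgh

theorem measure_rpow_mul_measure_rpow_le (hμ : IsPrekopaLeindler μ) {t s : ℝ} (ht : 0 < t)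
    (hs : 0 < s) (hts : t + s = 1) {A B : Set E} (hA : NullMeasurableSet A μ)
    (hB : NullMeasurableSet B μ) : μ A ^ t * μ B ^ s ≤ μ (t • A + s • B) := by
  obtain ⟨A', hA'A, hA', hμA⟩ := hA.exists_measurable_subset_ae_eq
  obtain ⟨B', hB'B, hB', hμB⟩ := hB.exists_measurable_subset_ae_eq
  set D := toMeasurable μ (t • A + s • B)
  have hD : MeasurableSet D := measurableSet_toMeasurable _ _
  have hind (x y : E) : A'.indicator 1 x ^ t * B'.indicator 1 y ^ s
      ≤ (D.indicator 1 (t • x + s • y) : ℝ≥0∞) := by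
    by_cases hx : x ∈ A'
    · by_cases hy : y ∈ B'
      · have hxy : t • x + s • y ∈ D := subset_toMeasurable _ _ <|
          Set.add_mem_add (Set.smul_mem_smul_set (hA'A hx)) (Set.smul_mem_smul_set (hB'B hy))
        simp [hx, hy, hxy]
      · simp [hy, hs]
    · simp [hx, ht]
  have hPL := hμ ht hs hts (measurable_one.indicator hA') (measurable_one.indicator hB')
    (measurable_one.indicator hD) hind
  rwa [lintegral_indicator_one hA', lintegral_indicator_one hB', lintegral_indicator_one hD,
    measure_congr hμA, measure_congr hμB, measure_toMeasurable] at hPL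

end Constructions

theorem of_continuousLinearEquiv {E F : Type*} [NormedAddCommGroup E] [NormedSpace ℝ E]
    [MeasurableSpace E] [BorelSpace E] [NormedAddCommGroup F] [NormedSpace ℝ F]
    [FiniteDimensional ℝ F] [MeasurableSpace F] [BorelSpace F] {μ : Measure E}
    [μ.IsAddHaarMeasure] (hμ : IsPrekopaLeindler μ) (e : E ≃L[ℝ] F) (ν : Measure F)
    [ν.IsAddHaarMeasure] : IsPrekopaLeindler ν := by
  rw [Measure.isAddLeftInvariant_eq_smul ν (μ.map e)]
  exact (hμ.map (e : E →ₗ[ℝ] F) e.continuous.measurable).smul _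

end IsPrekopaLeindler

theorem isPrekopaLeindler_volume_pi (n : ℕ) :
    IsPrekopaLeindler (volume : Measure (Fin n → ℝ)) := by
  induction n with
  | zero =>
    rw [volume_pi, Measure.pi_of_empty _ 0]
    exact isPrekopaLeindler_dirac 0
  | succ n ih =>
    exact (isPrekopaLeindler_volume_real.prod ih).of_continuousLinearEquiv
      (Fin.consLinearEquiv ℝ fun _ : Fin (n + 1) => ℝ).toContinuousLinearEquiv _

section Haar

variable {E : Type*} [NormedAddCommGroup E] [NormedSpace ℝ E] [FiniteDimensional ℝ E]
  [MeasurableSpace E] [BorelSpace E] (μ : Measure E) [μ.IsAddHaarMeasure]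

theorem isPrekopaLeindler_of_isAddHaarMeasure : IsPrekopaLeindler μ :=
  (isPrekopaLeindler_volume_pi (finrank ℝ E)).of_continuousLinearEquiv
    (ContinuousLinearEquiv.ofFinrankEq (by simp)) μ

variable [Nontrivial E] {A B : Set E}

theorem addHaar_smul_rpow_inv_finrank {r : ℝ} (hr : 0 ≤ r) (A : Set E) :
    μ (r • A) ^ (finrank ℝ E : ℝ)⁻¹ = ENNReal.ofReal r * μ A ^ (finrank ℝ E : ℝ)⁻¹ := by
  have hn : finrank ℝ E ≠ 0 := Module.finrank_pos.ne'
  rw [Measure.addHaar_smul_of_nonneg μ hr, ENNReal.mul_rpow_of_nonneg _ _ (by positivity),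
    ENNReal.ofReal_pow hr, ENNReal.pow_rpow_inv_natCast hn]

theorem exists_addHaar_inv_smul_eq_one (hA0 : μ A ≠ 0) (hAtop : μ A ≠ ∞) :
    ∃ a : ℝ, 0 < a ∧ ENNReal.ofReal a = μ A ^ (finrank ℝ E : ℝ)⁻¹ ∧ μ (a⁻¹ • A) = 1 := by
  have hn : 0 < (finrank ℝ E : ℝ)⁻¹ := inv_pos.2 (Nat.cast_pos.2 Module.finrank_pos)
  set r := μ A ^ (finrank ℝ E : ℝ)⁻¹ with hr
  have hr0 : r ≠ 0 := by simp [hr, hA0, hAtop]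
  have hrtop : r ≠ ∞ := ENNReal.rpow_ne_top_of_nonneg hn.le hAtop
  have ha : 0 < r.toReal := ENNReal.toReal_pos hr0 hrtop
  refine ⟨r.toReal, ha, ENNReal.ofReal_toReal hrtop, ?_⟩
  refine ENNReal.rpow_left_injective hn.ne' ?_
  simp only [ENNReal.one_rpow]
  rw [addHaar_smul_rpow_inv_finrank μ (inv_nonneg.2 ha.le), ← hr, ENNReal.ofReal_inv_of_pos ha,
    ENNReal.ofReal_toReal hrtop, ENNReal.inv_mul_cancel hr0 hrtop]

theorem brunn_minkowski_of_ne_zero_of_ne_top (hA : NullMeasurableSet A μ)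
    (hB : NullMeasurableSet B μ) (hA0 : μ A ≠ 0) (hB0 : μ B ≠ 0) (hAtop : μ A ≠ ∞)
    (hBtop : μ B ≠ ∞) :
    μ A ^ (finrank ℝ E : ℝ)⁻¹ + μ B ^ (finrank ℝ E : ℝ)⁻¹ ≤ μ (A + B) ^ (finrank ℝ E : ℝ)⁻¹ := by
  obtain ⟨a, ha, hμA, hA1⟩ := exists_addHaar_inv_smul_eq_one μ hA0 hAtop
  obtain ⟨b, hb, hμB, hB1⟩ := exists_addHaar_inv_smul_eq_one μ hB0 hBtop
  have hab : 0 < a + b := add_pos ha hb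
  have hcombo : (a / (a + b)) • a⁻¹ • A + (b / (a + b)) • b⁻¹ • B = (a + b)⁻¹ • (A + B) := by
    rw [smul_smul, smul_smul, smul_add]
    congr 2 <;> field_simp
  have hone : 1 ≤ μ ((a + b)⁻¹ • (A + B)) := by
    simpa [hA1, hB1, hcombo] using
      (isPrekopaLeindler_of_isAddHaarMeasure μ).measure_rpow_mul_measure_rpow_le
        (div_pos ha hab) (div_pos hb hab) (by field_simp)
        (Measure.NullMeasurableSet.const_smul hA a⁻¹)
        (Measure.NullMeasurableSet.const_smul hB b⁻¹)
  have hscaled := ENNReal.rpow_le_rpow hone (z := (finrank ℝ E : ℝ)⁻¹) (by positivity)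
  rw [ENNReal.one_rpow, addHaar_smul_rpow_inv_finrank μ (inv_nonneg.2 hab.le),
    ENNReal.ofReal_inv_of_pos hab, ← ENNReal.div_eq_inv_mul,
    ENNReal.le_div_iff_mul_le (.inl (by simpa using hab)) (.inl ENNReal.ofReal_ne_top),
    one_mul] at hscaled
  rwa [← hμA, ← hμB, ← ENNReal.ofReal_add ha.le hb.le]

theorem brunn_minkowski (hA : NullMeasurableSet A μ) (hB : NullMeasurableSet B μ)
    (hAne : A.Nonempty) (hBne : B.Nonempty) :
    μ A ^ (finrank ℝ E : ℝ)⁻¹ + μ B ^ (finrank ℝ E : ℝ)⁻¹ ≤ μ (A + B) ^ (finrank ℝ E : ℝ)⁻¹ := by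
  have hn : 0 < (finrank ℝ E : ℝ)⁻¹ := inv_pos.2 (Nat.cast_pos.2 Module.finrank_pos)
  have hA_le : μ A ≤ μ (A + B) := add_comm B A ▸ measure_le_measure_add_left μ hBne A
  have hB_le : μ B ≤ μ (A + B) := measure_le_measure_add_left μ hAne B
  rcases eq_or_ne (μ A) 0 with hA0 | hA0
  · simpa [hA0, hn] using ENNReal.rpow_le_rpow hB_le hn.le
  rcases eq_or_ne (μ B) 0 with hB0 | hB0
  · simpa [hB0, hn] using ENNReal.rpow_le_rpow hA_le hn.le
  rcases eq_or_ne (μ (A + B)) ∞ with htop | htop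
  · simp [htop, hn]
  exact brunn_minkowski_of_ne_zero_of_ne_top μ hA hB hA0 hB0 (ne_top_of_le_ne_top htop hA_le)
    (ne_top_of_le_ne_top htop hB_le)

theorem concaveOn_addHaar_rpow_inv_finrank {X : Type*} [AddCommGroup X] [Module ℝ X] {S : Set X}
    (hS : Convex ℝ S) {A : X → Set E} (hne : ∀ x ∈ S, (A x).Nonempty)
    (hfin : ∀ x ∈ S, μ (A x) ≠ ∞)
    (hA : ∀ x ∈ S, ∀ y ∈ S, ∀ t s : ℝ, 0 ≤ t → 0 ≤ s → t + s = 1 →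
      t • A x + s • A y ⊆ A (t • x + s • y)) :
    ConcaveOn ℝ S fun x => (μ (A x)).toReal ^ (finrank ℝ E : ℝ)⁻¹ := by
  set p := (finrank ℝ E : ℝ)⁻¹
  have hp : 0 ≤ p := by positivity
  have hconv : ∀ x ∈ S, Convex ℝ (A x) := fun x hx =>
    convex_iff_pointwise_add_subset.2 fun t s ht hs hts => by
      simpa only [Convex.combo_self hts] using hA x hx x hx t s ht hs hts
  refine ⟨hS, fun x hx y hy t s ht hs hts => ?_⟩
  have hBM : ENNReal.ofReal t * μ (A x) ^ p + ENNReal.ofReal s * μ (A y) ^ p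
      ≤ μ (A (t • x + s • y)) ^ p :=
    calc ENNReal.ofReal t * μ (A x) ^ p + ENNReal.ofReal s * μ (A y) ^ p
        = μ (t • A x) ^ p + μ (s • A y) ^ p := by
          rw [addHaar_smul_rpow_inv_finrank μ ht, addHaar_smul_rpow_inv_finrank μ hs]
      _ ≤ μ (t • A x + s • A y) ^ p :=
          brunn_minkowski μ (((hconv x hx).smul t).nullMeasurableSet μ)
            (((hconv y hy).smul s).nullMeasurableSet μ) (hne x hx).smul_set (hne y hy).smul_set
      _ ≤ μ (A (t • x + s • y)) ^ p :=
          ENNReal.rpow_le_rpow (measure_mono (hA x hx y hy t s ht hs hts)) hp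
  have htop {z : X} (hz : z ∈ S) : μ (A z) ^ p ≠ ∞ := ENNReal.rpow_ne_top_of_nonneg hp (hfin z hz)
  have hreal := ENNReal.toReal_mono (htop (hS hx hy ht hs hts)) hBM
  rw [ENNReal.toReal_add (ENNReal.mul_ne_top ENNReal.ofReal_ne_top (htop hx))
    (ENNReal.mul_ne_top ENNReal.ofReal_ne_top (htop hy)), ENNReal.toReal_mul, ENNReal.toReal_mul,
    ENNReal.toReal_ofReal ht, ENNReal.toReal_ofReal hs] at hreal
  simpa only [ENNReal.toReal_rpow, smul_eq_mul] using hreal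

end Haar

section Intersection

variable {E : Type*} [AddCommGroup E] {K C : Set E}

theorem inter_singleton_add_nonempty_iff {x : E} : (K ∩ ({x} + C)).Nonempty ↔ x ∈ K - C := by
  constructor
  · rintro ⟨_, hy, _, rfl, z, hz, rfl⟩
    exact ⟨_, hy, z, hz, add_sub_cancel_right _ _⟩
  · rintro ⟨y, hy, z, hz, rfl⟩
    exact ⟨y, hy, y - z, rfl, z, hz, sub_add_cancel y z⟩

theorem smul_inter_add_smul_inter_subset [Module ℝ E] (hK : Convex ℝ K) (hC : Convex ℝ C)
    (x y : E) {t s : ℝ} (ht : 0 ≤ t) (hs : 0 ≤ s) (hts : t + s = 1) :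
    t • (K ∩ ({x} + C)) + s • (K ∩ ({y} + C)) ⊆ K ∩ ({t • x + s • y} + C) := by
  rintro _ ⟨_, ⟨_, ⟨hu, _, rfl, p, hp, rfl⟩, rfl⟩, _, ⟨_, ⟨hv, _, rfl, q, hq, rfl⟩, rfl⟩, rfl⟩
  refine ⟨hK hu hv ht hs hts, _, rfl, t • p + s • q, hC hp hq ht hs hts, ?_⟩
  module

end Intersection

theorem concaveOn_vol_inter_rpow_general {E : Type*} [NormedAddCommGroup E] [NormedSpace ℝ E]
    [FiniteDimensional ℝ E] [Nontrivial E] [MeasurableSpace E] [BorelSpace E] (μ : Measure E)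
    [μ.IsAddHaarMeasure] {K C : Set E} (hK : Convex ℝ K) (hC : Convex ℝ C)
    (hfin : ∀ x ∈ K - C, μ (K ∩ ({x} + C)) ≠ ∞) :
    ConcaveOn ℝ (K - C) fun x => (μ (K ∩ ({x} + C))).toReal ^ (1 / finrank ℝ E : ℝ) := by
  simp only [one_div]
  exact concaveOn_addHaar_rpow_inv_finrank μ (hK.sub hC)
    (fun _ => inter_singleton_add_nonempty_iff.2) hfin
    fun x _ y _ _ _ => smul_inter_add_smul_inter_subset hK hC x y

/-- For convex bodies `K` and `C` in `ℝⁿ` and `α, β > 0`, the function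
`x ↦ |αK ∩ (x+βC)|^(1/n)` is concave on the Minkowski difference body `αK − βC`. -/
theorem concaveOn_vol_inter_rpow {n : ℕ} (hn : 1 ≤ n)
    (K C : Set (EuclideanSpace ℝ (Fin n))) (α β : ℝ) (hα : 0 < α) (hβ : 0 < β)
    (hKcomp : IsCompact K) (hKconv : Convex ℝ K) (hKint : (interior K).Nonempty)
    (hCcomp : IsCompact C) (hCconv : Convex ℝ C) (hCint : (interior C).Nonempty) :
    ConcaveOn ℝ (α • K - β • C)
      (fun x => (volume ((α • K) ∩ ({x} + β • C))).toReal ^ ((1:ℝ)/(n:ℝ))) := by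
  have : Nonempty (Fin n) := ⟨⟨0, hn⟩⟩
  simpa using concaveOn_vol_inter_rpow_general volume (hKconv.smul α) (hCconv.smul β)
    fun x _ => measure_ne_top_of_subset Set.inter_subset_left (hKcomp.smul α).measure_ne_top
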